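/- For every positive integer m, the Minkowski dimension of A_m equals 1 − 1/2^m; equivalently, lim_{δ→0⁺} log λ(V_δ(A_m)) / log δ = 1/2^m. -/

import Mathlib

open MeasureTheory Filter Set

/-- The closed `δ`-neighbourhood `V_δ(Ω) = {x : ∃ y ∈ Ω, |x - y| ≤ δ}`. -/
def closedNbhd (Ω : Set ℝ) (δ : ℝ) : Set ℝ := {x : ℝ | ∃ y ∈ Ω, |x - y| ≤ δ}

/-- `E_m`: the set of rationals `x ∈ (0,1]` whose greedy Egyptian fraction expansion
has length `m`: there are integers `1 ≤ a 0 < a 1 < ⋯ < a (m-1)` with `x = Σ_{i<m} 1/a i`,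
and for every `ℓ < m` one has `Σ_{i ≤ ℓ} 1/a i ≤ x` and
`x - Σ_{i<ℓ} 1/a i < 1/(a ℓ - 1)` (the latter stated in the multiplied-out form
`(a ℓ - 1) * (x - Σ_{i<ℓ} 1/a i) < 1`, which is the correct reading also when `a ℓ = 1`,
where `1/(a ℓ - 1) = ∞`). -/
def Eset (m : ℕ) : Set ℝ :=
  {x : ℝ | x ∈ Set.Ioc (0 : ℝ) 1 ∧
    ∃ a : ℕ → ℕ,
      (∀ i, i < m → 1 ≤ a i) ∧
      (∀ i j, i < j → j < m → a i < a j) ∧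
      x = ∑ i ∈ Finset.range m, (1 : ℝ) / (a i : ℝ) ∧
      ∀ ℓ, ℓ < m →
        (∑ i ∈ Finset.range (ℓ + 1), (1 : ℝ) / (a i : ℝ)) ≤ x ∧
        ((a ℓ : ℝ) - 1) * (x - ∑ i ∈ Finset.range ℓ, (1 : ℝ) / (a i : ℝ)) < 1}

/-- `A_m = ⋃_{p=0}^m E_p`, where `E_0 = {0}`. -/
def Aset (m : ℕ) : Set ℝ := {0} ∪ ⋃ (p : ℕ) (_ : 1 ≤ p) (_ : p ≤ m), Eset p

/-!
The greedy algorithm iterates the map `T x = x - 1 / ⌈1 / x⌉`, and `A_m` is the set of `x ∈ [0, 1]`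
with `T^[m] x = 0`.

Lower bound: `T x ≤ x ^ 2`, so `T^[m] x ≤ x ^ 2 ^ m`. Since `x - T^[m] x` lies in `A_m`, the
`t ^ 2 ^ m`-neighbourhood of `A_m` covers `[0, t]`.

Upper bound: a point of `A_{m+1}` is either at most `1 / K` or has first denominator `a ≤ K` and
lies in `1 / a + A_m`, so `λ(V_δ(A_{m+1})) ≤ 1 / K + 2 * δ + K * λ(V_δ(A_m))`. Choosing `K` of order
`δ ^ (-1 / 2 ^ (m + 1))` balances the two main terms, and induction gives `O(δ ^ (1 / 2 ^ m))`.
-/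

section Asymptotics

open Asymptotics Topology

lemma isBigO_log_sub_log_of_isTheta {α : Type*} {l : Filter α} {f g : α → ℝ}
    (h : f =Θ[l] g) :
    (fun x => Real.log (f x) - Real.log (g x)) =O[l] fun _ => (1 : ℝ) := by
  obtain ⟨C, hC, hfg⟩ := h.1.exists_pos
  obtain ⟨D, hD, hgf⟩ := h.2.exists_pos
  refine IsBigO.of_bound (|Real.log C| + |Real.log D|) ?_
  filter_upwards [hfg.bound, hgf.bound] with x hfgx hgfx
  rcases eq_or_ne (g x) 0 with hgx | hgx
  · have hfx : f x = 0 := by simpa [hgx] using hfgx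
    rw [hfx, hgx, sub_self, norm_zero]
    positivity
  have hg_pos : 0 < ‖g x‖ := norm_pos_iff.2 hgx
  have hf_pos : 0 < ‖f x‖ := pos_of_mul_pos_right (hg_pos.trans_le hgfx) hD.le
  have hlog_le := Real.log_le_log hf_pos hfgx
  have hlog_ge := Real.log_le_log hg_pos hgfx
  rw [Real.log_mul hC.ne' hg_pos.ne'] at hlog_le
  rw [Real.log_mul hD.ne' hf_pos.ne'] at hlog_ge
  simp only [Real.norm_eq_abs, Real.log_abs] at hlog_le hlog_ge
  rw [norm_one, mul_one, Real.norm_eq_abs, abs_le]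
  constructor <;>
    linarith [le_abs_self (Real.log C), le_abs_self (Real.log D), abs_nonneg (Real.log C),
      abs_nonneg (Real.log D)]

lemma tendsto_log_div_log_of_isTheta_rpow {f : ℝ → ℝ} {s : ℝ}
    (h : f =Θ[𝓝[>] 0] fun δ => δ ^ s) :
    Tendsto (fun δ => Real.log (f δ) / Real.log δ) (𝓝[>] 0) (𝓝 s) := by
  have hpos : ∀ᶠ δ : ℝ in 𝓝[>] 0, δ ∈ Ioo 0 1 := Ioo_mem_nhdsGT one_pos
  have hdiff : (fun δ => Real.log (f δ) - Real.log (δ ^ s)) =o[𝓝[>] 0] Real.log :=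
    (isBigO_log_sub_log_of_isTheta h).trans_isLittleO <| isLittleO_const_left.2 <|
      Or.inr <| tendsto_abs_atBot_atTop.comp Real.tendsto_log_nhdsGT_zero
  have hlim := hdiff.tendsto_div_nhds_zero.const_add s
  rw [add_zero] at hlim
  refine hlim.congr' (hpos.mono fun δ hδ => ?_)
  have hlog : Real.log δ ≠ 0 := (Real.log_neg hδ.1 hδ.2).ne
  rw [Real.log_rpow hδ.1]
  field_simp
  ring

end Asymptotics

section ClosedNbhd

variable {Ω Ω' : Set ℝ} {δ : ℝ}

lemma closedNbhd_mono (h : Ω ⊆ Ω') : closedNbhd Ω δ ⊆ closedNbhd Ω' δ :=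
  fun _ ⟨y, hy, hxy⟩ => ⟨y, h hy, hxy⟩

lemma volume_closedNbhd_ne_top (hΩ : Bornology.IsBounded Ω) : volume (closedNbhd Ω δ) ≠ ⊤ := by
  refine (hΩ.cthickening (δ := δ)).subset ?_ |>.measure_lt_top.ne
  rintro x ⟨y, hy, hxy⟩
  exact Metric.mem_cthickening_of_dist_le x y δ Ω hy hxy

lemma closedNbhd_union_biUnion_preimage_subset {ι : Type*} (s : Finset ι) (c : ι → ℝ) (a b : ℝ) :
    closedNbhd (Icc a b ∪ ⋃ i ∈ s, (· + c i) ⁻¹' Ω) δ ⊆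
      Icc (a - δ) (b + δ) ∪ ⋃ i ∈ s, (· + c i) ⁻¹' closedNbhd Ω δ := by
  rintro x ⟨y, hy | hy, hxy⟩
  · obtain ⟨hl, hr⟩ := abs_le.1 hxy
    exact Or.inl ⟨by linarith [hy.1], by linarith [hy.2]⟩
  · obtain ⟨i, hi, hyi⟩ := mem_iUnion₂.1 hy
    exact Or.inr (mem_iUnion₂.2 ⟨i, hi, y + c i, hyi, by rwa [add_sub_add_right_eq_sub]⟩)

lemma volume_real_closedNbhd_le_of_subset_union {ι : Type*} {s : Finset ι} {c : ι → ℝ} {a b : ℝ}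
    (hΩ : Bornology.IsBounded Ω) (hab : a ≤ b) (hδ : 0 ≤ δ)
    (hsub : Ω' ⊆ Icc a b ∪ ⋃ i ∈ s, (· + c i) ⁻¹' Ω) :
    volume.real (closedNbhd Ω' δ) ≤ b - a + 2 * δ + s.card * volume.real (closedNbhd Ω δ) := by
  have htranslate (i : ι) :
      volume ((· + c i) ⁻¹' closedNbhd Ω δ) = volume (closedNbhd Ω δ) :=
    measure_preimage_add_right volume (c i) _
  have hfin : volume (⋃ i ∈ s, (· + c i) ⁻¹' closedNbhd Ω δ) ≠ ⊤ :=
    ((measure_biUnion_lt_top s.finite_toSet) fun i _ => by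
      rw [htranslate]
      exact (volume_closedNbhd_ne_top hΩ).lt_top).ne
  calc volume.real (closedNbhd Ω' δ)
      ≤ volume.real (Icc (a - δ) (b + δ) ∪ ⋃ i ∈ s, (· + c i) ⁻¹' closedNbhd Ω δ) :=
        measureReal_mono ((closedNbhd_mono hsub).trans
          (closedNbhd_union_biUnion_preimage_subset s c a b))
          (measure_union_ne_top measure_Icc_lt_top.ne hfin)
    _ ≤ volume.real (Icc (a - δ) (b + δ)) +
          ∑ i ∈ s, volume.real ((· + c i) ⁻¹' closedNbhd Ω δ) :=
        (measureReal_union_le _ _).trans (by gcongr; exact measureReal_biUnion_finset_le _ _)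
    _ = b - a + 2 * δ + s.card * volume.real (closedNbhd Ω δ) := by
        simp only [Measure.real, htranslate, Finset.sum_const, nsmul_eq_mul]
        rw [← Measure.real, Real.volume_real_Icc_of_le (by linarith)]
        ring

end ClosedNbhd

section GreedyStep

/-- The first denominator of the greedy Egyptian fraction expansion of `x > 0`, that is, the least
positive integer `a` with `1 / a ≤ x`. It is `0` at `x = 0`, because `1 / 0 = 0`. -/
noncomputable def greedyDenom (x : ℝ) : ℕ := ⌈1 / x⌉₊

/-- What is left of `x` after the first step of the greedy algorithm. It fixes `0`, because
`1 / 0 = 0`, so iterates beyond the end of the expansion of `x` are still `0`. -/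
noncomputable def greedyRemainder (x : ℝ) : ℝ := x - 1 / greedyDenom x

variable {x : ℝ}

lemma greedyRemainder_zero : greedyRemainder 0 = 0 := by
  simp [greedyRemainder, greedyDenom]

lemma greedyDenom_pos (hx : 0 < x) : 0 < greedyDenom x :=
  Nat.ceil_pos.2 (one_div_pos.2 hx)

lemma one_div_greedyDenom_le (hx : 0 ≤ x) : 1 / (greedyDenom x : ℝ) ≤ x := by
  rcases hx.eq_or_lt with rfl | hx
  · simp [greedyDenom]
  · exact (one_div_le (by exact_mod_cast greedyDenom_pos hx) hx).2 (Nat.le_ceil _)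

lemma greedyDenom_sub_one_mul_lt_one (hx : 0 ≤ x) : ((greedyDenom x : ℝ) - 1) * x < 1 := by
  rcases hx.eq_or_lt with rfl | hx
  · simp
  · rw [← lt_div_iff₀ hx, sub_lt_iff_lt_add]
    exact Nat.ceil_lt_add_one (one_div_pos.2 hx).le

lemma greedyDenom_eq {a : ℕ} (ha : 0 < a) (hle : 1 / (a : ℝ) ≤ x) (hlt : ((a : ℝ) - 1) * x < 1) :
    greedyDenom x = a := by
  have ha' : (0 : ℝ) < a := by exact_mod_cast ha
  have hx : 0 < x := (one_div_pos.2 ha').trans_le hle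
  rw [greedyDenom, Nat.ceil_eq_iff ha.ne', Nat.cast_pred ha]
  exact ⟨(lt_div_iff₀ hx).2 hlt, (one_div_le ha' hx).1 hle⟩

lemma greedyRemainder_nonneg (hx : 0 ≤ x) : 0 ≤ greedyRemainder x :=
  sub_nonneg.2 (one_div_greedyDenom_le hx)

lemma greedyRemainder_le (x : ℝ) : greedyRemainder x ≤ x :=
  sub_le_self x (by positivity)

lemma greedyRemainder_mul_greedyDenom (hx : 0 < x) :
    greedyRemainder x * greedyDenom x = greedyDenom x * x - 1 := by
  have hd : (greedyDenom x : ℝ) ≠ 0 := by exact_mod_cast (greedyDenom_pos hx).ne'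
  rw [greedyRemainder]
  field_simp

lemma greedyRemainder_le_sq (hx : 0 ≤ x) : greedyRemainder x ≤ x ^ 2 := by
  rcases hx.eq_or_lt with rfl | hx
  · simp [greedyRemainder_zero]
  have hd : (0 : ℝ) < greedyDenom x := by exact_mod_cast greedyDenom_pos hx
  have hmul_le : greedyRemainder x * greedyDenom x ≤ x := by
    linarith [greedyRemainder_mul_greedyDenom hx, greedyDenom_sub_one_mul_lt_one hx.le]
  calc greedyRemainder x ≤ x * (1 / greedyDenom x) := by rwa [mul_one_div, le_div_iff₀ hd]
    _ ≤ x * x := by gcongr; exact one_div_greedyDenom_le hx.le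
    _ = x ^ 2 := (sq x).symm

lemma greedyRemainder_lt_one_div_greedyDenom (hx : x ∈ Ioc 0 1) :
    greedyRemainder x < 1 / greedyDenom x := by
  rw [lt_div_iff₀ (by exact_mod_cast greedyDenom_pos hx.1)]
  linarith [greedyRemainder_mul_greedyDenom hx.1, greedyDenom_sub_one_mul_lt_one hx.1.le, hx.2]

lemma greedyDenom_lt_greedyDenom_greedyRemainder (hx : x ∈ Ioc 0 1) (hne : greedyRemainder x ≠ 0) :
    greedyDenom x < greedyDenom (greedyRemainder x) := by
  have hpos : 0 < greedyRemainder x := (greedyRemainder_nonneg hx.1.le).lt_of_ne' hne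
  have hlt : 1 / (greedyDenom (greedyRemainder x) : ℝ) < 1 / greedyDenom x :=
    (one_div_greedyDenom_le hpos.le).trans_lt (greedyRemainder_lt_one_div_greedyDenom hx)
  exact_mod_cast lt_of_one_div_lt_one_div (by exact_mod_cast greedyDenom_pos hpos) hlt

lemma greedyRemainder_sub {r : ℝ} (hr : 0 ≤ r) (hrx : r ≤ greedyRemainder x) :
    greedyRemainder (x - r) = greedyRemainder x - r := by
  have hle : 1 / (greedyDenom x : ℝ) ≤ x - r := by
    rw [greedyRemainder] at hrx
    linarith
  have hx : 0 ≤ x := by linarith [(by positivity : 0 ≤ 1 / (greedyDenom x : ℝ))]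
  rcases hx.eq_or_lt with rfl | hx
  · obtain rfl : r = 0 := le_antisymm (by rwa [greedyRemainder_zero] at hrx) hr
    simp only [sub_zero]
  have hd : 0 < greedyDenom x := greedyDenom_pos hx
  have hlt : ((greedyDenom x : ℝ) - 1) * (x - r) < 1 := by
    refine lt_of_le_of_lt ?_ (greedyDenom_sub_one_mul_lt_one hx.le)
    have : (1 : ℝ) ≤ greedyDenom x := by exact_mod_cast hd
    exact mul_le_mul_of_nonneg_left (sub_le_self x hr) (sub_nonneg.2 this)
  rw [greedyRemainder, greedyDenom_eq hd hle hlt, greedyRemainder]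
  ring

end GreedyStep

section GreedyIterates

variable {x : ℝ}

lemma iterate_greedyRemainder_nonneg (hx : 0 ≤ x) (n : ℕ) : 0 ≤ greedyRemainder^[n] x :=
  (show MapsTo greedyRemainder (Ici 0) (Ici 0) from fun _ => greedyRemainder_nonneg).iterate n hx

lemma iterate_greedyRemainder_le (x : ℝ) (n : ℕ) : greedyRemainder^[n] x ≤ x :=
  Function.iterate_le_id_of_le_id greedyRemainder_le n x

lemma iterate_greedyRemainder_le_pow (hx : 0 ≤ x) (n : ℕ) :
    greedyRemainder^[n] x ≤ x ^ 2 ^ n := by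
  induction n with
  | zero => simp
  | succ n ih =>
    have hn := iterate_greedyRemainder_nonneg hx n
    rw [Function.iterate_succ_apply']
    calc greedyRemainder (greedyRemainder^[n] x) ≤ (greedyRemainder^[n] x) ^ 2 :=
          greedyRemainder_le_sq hn
      _ ≤ (x ^ 2 ^ n) ^ 2 := by gcongr
      _ = x ^ 2 ^ (n + 1) := by rw [← pow_mul, pow_succ]

lemma iterate_greedyRemainder_eq_zero_of_le {n k : ℕ} (h : greedyRemainder^[n] x = 0)
    (hnk : n ≤ k) : greedyRemainder^[k] x = 0 := by
  rw [← Nat.sub_add_cancel hnk, Function.iterate_add_apply, h,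
    Function.iterate_fixed greedyRemainder_zero]

lemma iterate_greedyRemainder_sub_self (hx : 0 ≤ x) (n : ℕ) :
    greedyRemainder^[n] (x - greedyRemainder^[n] x) = 0 := by
  induction n generalizing x with
  | zero => simp
  | succ n ih =>
    have hr := greedyRemainder_nonneg hx
    rw [Function.iterate_succ_apply, Function.iterate_succ_apply,
      greedyRemainder_sub (iterate_greedyRemainder_nonneg hr n) (iterate_greedyRemainder_le _ n)]
    exact ih hr

lemma sum_one_div_greedyDenom_iterate (x : ℝ) (n : ℕ) :
    ∑ i ∈ Finset.range n, 1 / (greedyDenom (greedyRemainder^[i] x) : ℝ) =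
      x - greedyRemainder^[n] x := by
  calc ∑ i ∈ Finset.range n, 1 / (greedyDenom (greedyRemainder^[i] x) : ℝ)
      = ∑ i ∈ Finset.range n, (greedyRemainder^[i] x - greedyRemainder^[i + 1] x) := by
        simp only [Function.iterate_succ_apply', greedyRemainder, sub_sub_cancel]
    _ = x - greedyRemainder^[n] x := Finset.sum_range_sub' (greedyRemainder^[·] x) n

end GreedyIterates

section ExpansionsOfBoundedLength

variable {p : ℕ} {x : ℝ}

lemma iterate_greedyRemainder_eq_zero_of_mem_Eset (hx : x ∈ Eset p) :
    greedyRemainder^[p] x = 0 := by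
  obtain ⟨-, a, ha, -, hsum, hgreedy⟩ := hx
  have hremainder : ∀ n ≤ p,
      greedyRemainder^[n] x = x - ∑ i ∈ Finset.range n, 1 / (a i : ℝ) := by
    intro n
    induction n with
    | zero => simp
    | succ n ih =>
      intro hn
      obtain ⟨hle, hlt⟩ := hgreedy n hn
      rw [Finset.sum_range_succ, ← le_sub_iff_add_le'] at hle
      rw [Function.iterate_succ_apply', ih (by omega), greedyRemainder,
        greedyDenom_eq (ha n hn) hle hlt, Finset.sum_range_succ, sub_sub]
  rw [hremainder p le_rfl, ← hsum, sub_self]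

lemma mem_Eset_of_iterate_greedyRemainder_eq_zero (hx : x ∈ Ioc 0 1)
    (hzero : greedyRemainder^[p] x = 0) (hne : ∀ k < p, greedyRemainder^[k] x ≠ 0) :
    x ∈ Eset p := by
  have hnonneg (k : ℕ) : 0 ≤ greedyRemainder^[k] x := iterate_greedyRemainder_nonneg hx.1.le k
  have hmem (k : ℕ) (hk : k < p) : greedyRemainder^[k] x ∈ Ioc 0 1 :=
    ⟨(hnonneg k).lt_of_ne' (hne k hk), (iterate_greedyRemainder_le x k).trans hx.2⟩
  have hmono : StrictMonoOn (fun k => greedyDenom (greedyRemainder^[k] x)) (Iio p) := by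
    refine strictMonoOn_of_lt_succ ordConnected_Iio fun k _ hk hk' => ?_
    have hsucc := hne _ hk'
    rw [Nat.succ_eq_succ, Function.iterate_succ_apply'] at hsucc
    simpa only [Nat.succ_eq_succ, Function.iterate_succ_apply'] using
      greedyDenom_lt_greedyDenom_greedyRemainder (hmem k hk) hsucc
  refine ⟨hx, fun k => greedyDenom (greedyRemainder^[k] x),
    fun k hk => greedyDenom_pos (hmem k hk).1, fun i j hij hj => hmono (hij.trans hj) hj hij,
    ?_, fun k _ => ?_⟩
  · rw [sum_one_div_greedyDenom_iterate, hzero, sub_zero]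
  · rw [sum_one_div_greedyDenom_iterate, sum_one_div_greedyDenom_iterate, sub_sub_cancel]
    exact ⟨sub_le_self x (hnonneg _), greedyDenom_sub_one_mul_lt_one (hnonneg k)⟩

lemma mem_Aset_iff {m : ℕ} : x ∈ Aset m ↔ x ∈ Icc 0 1 ∧ greedyRemainder^[m] x = 0 := by
  constructor
  · rintro (rfl | hx)
    · exact ⟨by simp, Function.iterate_fixed greedyRemainder_zero m⟩
    · simp only [mem_iUnion] at hx
      obtain ⟨p, -, hpm, hx⟩ := hx
      exact ⟨Ioc_subset_Icc_self hx.1, iterate_greedyRemainder_eq_zero_of_le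
        (iterate_greedyRemainder_eq_zero_of_mem_Eset hx) hpm⟩
  · rintro ⟨⟨hx0, hx1⟩, hzero⟩
    rcases hx0.eq_or_lt with rfl | hx0
    · exact Or.inl rfl
    have hex : ∃ p, greedyRemainder^[p] x = 0 := ⟨m, hzero⟩
    classical
    refine Or.inr (mem_iUnion.2 ⟨Nat.find hex, mem_iUnion₂.2
      ⟨(Nat.find_pos hex).2 hx0.ne', Nat.find_min' hex hzero, ?_⟩⟩)
    exact mem_Eset_of_iterate_greedyRemainder_eq_zero ⟨hx0, hx1⟩ (Nat.find_spec hex)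
      fun k hk => Nat.find_min hex hk

lemma Aset_zero : Aset 0 = {0} := by
  ext x
  rw [mem_Aset_iff, Function.iterate_zero_apply, mem_singleton_iff, and_iff_right_iff_imp]
  rintro rfl
  simp

lemma isBounded_Aset (m : ℕ) : Bornology.IsBounded (Aset m) :=
  (Metric.isBounded_Icc 0 1).subset fun _ hx => (mem_Aset_iff.1 hx).1

lemma Aset_succ_subset (m : ℕ) {K : ℕ} (hK : 0 < K) :
    Aset (m + 1) ⊆
      Icc 0 (1 / (K : ℝ)) ∪ ⋃ a ∈ Finset.Icc 1 K, (· + -(1 / (a : ℝ))) ⁻¹' Aset m := by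
  intro x hx
  obtain ⟨⟨hx0, hx1⟩, hzero⟩ := mem_Aset_iff.1 hx
  rcases le_or_gt x (1 / (K : ℝ)) with hxK | hxK
  · exact Or.inl ⟨hx0, hxK⟩
  have hx_pos : 0 < x := lt_of_le_of_lt (by positivity) hxK
  have hdenom : greedyDenom x ≤ K :=
    Nat.ceil_le.2 ((one_div_le (by exact_mod_cast hK) hx_pos).1 hxK.le)
  have hremainder : greedyRemainder x ∈ Aset m :=
    mem_Aset_iff.2 ⟨⟨greedyRemainder_nonneg hx0, (greedyRemainder_le x).trans hx1⟩, hzero⟩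
  refine Or.inr (mem_iUnion₂.2
    ⟨greedyDenom x, Finset.mem_Icc.2 ⟨greedyDenom_pos hx_pos, hdenom⟩, ?_⟩)
  rwa [mem_preimage, ← sub_eq_add_neg]

lemma volume_real_closedNbhd_Aset_succ_le (m : ℕ) {K : ℕ} (hK : 0 < K) {δ : ℝ} (hδ : 0 ≤ δ) :
    volume.real (closedNbhd (Aset (m + 1)) δ) ≤
      1 / K + 2 * δ + K * volume.real (closedNbhd (Aset m) δ) := by
  simpa using volume_real_closedNbhd_le_of_subset_union (isBounded_Aset m) (by positivity) hδ
    (Aset_succ_subset m hK)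

-- The constant solves `C₀ = 2`, `Cₘ₊₁ = 2 * Cₘ + 3`.
lemma volume_real_closedNbhd_Aset_le (m : ℕ) {t : ℝ} (ht : t ∈ Ioc 0 1) :
    volume.real (closedNbhd (Aset m) (t ^ 2 ^ m)) ≤ (5 * 2 ^ m - 3) * t := by
  induction m generalizing t with
  | zero =>
    have hball : closedNbhd (Aset 0) t = Icc (-t) t := by
      ext x
      simp only [closedNbhd, Aset_zero, mem_singleton_iff, exists_eq_left, sub_zero, abs_le,
        mem_ofPred_eq, mem_Icc]
    rw [pow_zero, pow_one, hball, Real.volume_real_Icc_of_le (by linarith [ht.1])]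
    linarith
  | succ m ih =>
    obtain ⟨ht0, ht1⟩ := ht
    set K : ℕ := ⌈1 / t⌉₊
    have hK : 0 < K := Nat.ceil_pos.2 (one_div_pos.2 ht0)
    have hK_inv : 1 / (K : ℝ) ≤ t :=
      (one_div_le (by exact_mod_cast hK) ht0).2 (Nat.le_ceil _)
    have hK_mul : K * t ≤ 2 := by
      have : (K : ℝ) * t < (1 / t + 1) * t := by
        gcongr
        exact Nat.ceil_lt_add_one (one_div_pos.2 ht0).le
      rw [add_mul, one_div_mul_cancel ht0.ne'] at this
      linarith
    have hδ : t ^ 2 ^ (m + 1) ≤ t := pow_le_of_le_one ht0.le ht1 (by positivity)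
    have hC : (0 : ℝ) ≤ 5 * 2 ^ m - 3 := by
      linarith [one_le_pow₀ (one_le_two : (1 : ℝ) ≤ 2) (n := m)]
    have hprev : volume.real (closedNbhd (Aset m) (t ^ 2 ^ (m + 1))) ≤ (5 * 2 ^ m - 3) * t ^ 2 := by
      rw [pow_succ', pow_mul]
      exact ih ⟨by positivity, pow_le_one₀ ht0.le ht1⟩
    calc volume.real (closedNbhd (Aset (m + 1)) (t ^ 2 ^ (m + 1)))
        ≤ 1 / K + 2 * t ^ 2 ^ (m + 1) + K * volume.real (closedNbhd (Aset m) (t ^ 2 ^ (m + 1))) :=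
          volume_real_closedNbhd_Aset_succ_le m hK (by positivity)
      _ ≤ t + 2 * t + K * ((5 * 2 ^ m - 3) * t ^ 2) := by gcongr
      _ = 3 * t + (K * t) * ((5 * 2 ^ m - 3) * t) := by ring
      _ ≤ 3 * t + 2 * ((5 * 2 ^ m - 3) * t) := by gcongr
      _ = (5 * 2 ^ (m + 1) - 3) * t := by ring

lemma Icc_subset_closedNbhd_Aset (m : ℕ) {t : ℝ} (ht : t ≤ 1) :
    Icc 0 t ⊆ closedNbhd (Aset m) (t ^ 2 ^ m) := by
  rintro x ⟨hx0, hxt⟩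
  have hr := iterate_greedyRemainder_nonneg hx0 m
  refine ⟨x - greedyRemainder^[m] x, mem_Aset_iff.2 ⟨⟨sub_nonneg.2 (iterate_greedyRemainder_le x m),
    by linarith⟩, iterate_greedyRemainder_sub_self hx0 m⟩, ?_⟩
  calc |x - (x - greedyRemainder^[m] x)| = greedyRemainder^[m] x := by
        rw [sub_sub_cancel, abs_of_nonneg hr]
    _ ≤ x ^ 2 ^ m := iterate_greedyRemainder_le_pow hx0 m
    _ ≤ t ^ 2 ^ m := by gcongr

lemma le_volume_real_closedNbhd_Aset (m : ℕ) {t : ℝ} (ht : t ∈ Icc 0 1) :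
    t ≤ volume.real (closedNbhd (Aset m) (t ^ 2 ^ m)) := by
  simpa [ht.1] using measureReal_mono (μ := volume) (Icc_subset_closedNbhd_Aset m ht.2)
    (volume_closedNbhd_ne_top (isBounded_Aset m))

open Asymptotics Topology in
lemma isTheta_volume_real_closedNbhd_Aset (m : ℕ) :
    (fun δ => volume.real (closedNbhd (Aset m) δ)) =Θ[𝓝[>] 0]
      fun δ => δ ^ ((1 : ℝ) / 2 ^ m) := by
  have hpos : ∀ᶠ δ : ℝ in 𝓝[>] 0, δ ∈ Ioo 0 1 := Ioo_mem_nhdsGT one_pos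
  have hbounds : ∀ δ ∈ Ioo (0 : ℝ) 1, 0 ≤ δ ^ ((1 : ℝ) / 2 ^ m) ∧
      δ ^ ((1 : ℝ) / 2 ^ m) ≤ volume.real (closedNbhd (Aset m) δ) ∧
      volume.real (closedNbhd (Aset m) δ) ≤ (5 * 2 ^ m - 3) * δ ^ ((1 : ℝ) / 2 ^ m) := by
    rintro δ ⟨hδ0, hδ1⟩
    set t := δ ^ ((1 : ℝ) / 2 ^ m) with ht_def
    have ht0 : 0 < t := Real.rpow_pos_of_pos hδ0 _
    have ht1 : t ≤ 1 := Real.rpow_le_one hδ0.le hδ1.le (by positivity)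
    have ht_pow : t ^ 2 ^ m = δ := by
      rw [ht_def, one_div, ← Nat.cast_ofNat, ← Nat.cast_pow]
      exact Real.rpow_inv_natCast_pow hδ0.le (by positivity)
    rw [← ht_pow]
    exact ⟨ht0.le, le_volume_real_closedNbhd_Aset m ⟨ht0.le, ht1⟩,
      volume_real_closedNbhd_Aset_le m ⟨ht0, ht1⟩⟩
  constructor
  · refine IsBigO.of_bound (5 * 2 ^ m - 3) (hpos.mono fun δ hδ => ?_)
    obtain ⟨hnonneg, -, hle⟩ := hbounds δ hδ
    rwa [Real.norm_of_nonneg measureReal_nonneg, Real.norm_of_nonneg hnonneg]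
  · refine IsBigO.of_bound 1 (hpos.mono fun δ hδ => ?_)
    obtain ⟨hnonneg, hle, -⟩ := hbounds δ hδ
    rwa [one_mul, Real.norm_of_nonneg measureReal_nonneg, Real.norm_of_nonneg hnonneg]

end ExpansionsOfBoundedLength

/-- The Minkowski dimension of `A_m` is `1 - 1/2^m`:
`lim_{δ → 0⁺} log λ(V_δ(A_m)) / log δ = 1/2^m`. -/
theorem minkowski_dim_Am (m : ℕ) (hm : 0 < m) :
    Tendsto (fun δ : ℝ => Real.log (volume (closedNbhd (Aset m) δ)).toReal / Real.log δ)
      (nhdsWithin (0 : ℝ) (Set.Ioi 0)) (nhds ((1 : ℝ) / 2 ^ m)) :=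
  tendsto_log_div_log_of_isTheta_rpow (isTheta_volume_real_closedNbhd_Aset m)
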